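/- Let n ≥ 1 be an integer, t > 0 and λ a nonzero real number. Suppose U : ℂ^{2n} → [0,∞) is measurable and, for all F, G ∈ ℱ_t^λ(ℂ^{2n}), the function F·conj(G)·U is Lebesgue-integrable on ℂ^{2n} and ∫_{ℂ^{2n}} F(z,w) conj(G(z,w)) 𝒲_t^λ(z,w) dz dw = ∫_{ℂ^{2n}} F(z,w) conj(G(z,w)) U(z,w) dz dw. Then U = 𝒲_t^λ almost everywhere; i.e. the non-negative weight function of the twisted Fock space is unique. -/

import Mathlib

open MeasureTheory Complex Filter Topology

noncomputable section

/-- Real hyperbolic cotangent. -/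
def cothR (x : ℝ) : ℝ := Real.cosh x / Real.sinh x

/-- The Fock-space weight
`𝒲_t^λ(z,w) = exp(λ·Im(z·w̄)) · exp(-(λ/2)·coth(2tλ)·(|z|²+|w|²))`. -/
def WF (n : ℕ) (t lam : ℝ) (z w : Fin n → ℂ) : ℝ :=
  Real.exp (lam * ∑ j, (z j * (starRingEnd ℂ) (w j)).im) *
    Real.exp (-(lam / 2) * cothR (2 * t * lam) * ((∑ j, ‖z j‖ ^ 2) + ∑ j, ‖w j‖ ^ 2))

/-- Membership in the twisted Fock space `ℱ_t^λ(ℂ^{2n})`. -/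
def FockMem (n : ℕ) (t lam : ℝ) (G : (Fin n → ℂ) × (Fin n → ℂ) → ℂ) : Prop :=
  Differentiable ℂ G ∧
    Integrable (fun q : (Fin n → ℂ) × (Fin n → ℂ) => ‖G q‖ ^ 2 * WF n t lam q.1 q.2) volume

/-!
The exponentials `exp (A q)` of continuous `ℂ`-linear forms lie in the Fock space, because
`|λ| < λ coth (2tλ)` makes the weight decay like a Gaussian. Choosing `F = exp (i A / 2)` and
`G = exp (-i A / 2)` gives `F * conj G = exp (i Re A)`, and every real-linear form is some `Re A`.
The reproducing identity therefore says that `U` and `𝒲_t^λ` have the same Fourier transform.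
An integrable function is determined by its Fourier transform: for a real function whose transform
vanishes, the positive and negative parts are densities of finite measures with the same
characteristic function.
-/

section FourierUniqueness

variable {E : Type*} [NormedAddCommGroup E] [NormedSpace ℝ E]
  [MeasurableSpace E] [BorelSpace E] {μ : Measure E}

lemma integrable_mul_cexp_dual {f : E → ℂ} (hf : Integrable f μ) (L : StrongDual ℝ E) :
    Integrable (fun x => f x * cexp (L x * I)) μ :=
  hf.mul_bdd (c := 1) (by fun_prop) (ae_of_all _ fun x => (norm_exp_ofReal_mul_I (L x)).le)

lemma integral_ofReal_re_mul_cexp_dual_eq_zero {f : E → ℂ} (hf : Integrable f μ)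
    (h : ∀ L : StrongDual ℝ E, ∫ x, f x * cexp (L x * I) ∂μ = 0) (L : StrongDual ℝ E) :
    ∫ x, ((f x).re : ℂ) * cexp (L x * I) ∂μ = 0 := by
  have hconj_int : Integrable (fun x => starRingEnd ℂ (f x * cexp ((-L) x * I))) μ :=
    conjLIE.integrable_comp_iff.2 (integrable_mul_cexp_dual hf (-L))
  have hconj : ∫ x, starRingEnd ℂ (f x * cexp ((-L) x * I)) ∂μ = 0 := by
    rw [integral_conj, h, map_zero]
  calc ∫ x, ((f x).re : ℂ) * cexp (L x * I) ∂μ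
      = ∫ x, 2⁻¹ * (f x * cexp (L x * I) + starRingEnd ℂ (f x * cexp ((-L) x * I))) ∂μ := by
        congr with x
        simp only [re_eq_add_conj, map_mul, ← exp_conj, neg_apply, ofReal_neg, map_neg,
          conj_ofReal, conj_I, neg_mul_neg]
        ring
    _ = 0 := by
        rw [integral_const_mul, integral_add (integrable_mul_cexp_dual hf L) hconj_int,
          h, hconj]
        simp

variable [CompleteSpace E] [SecondCountableTopology E]

lemma ae_eq_zero_of_forall_integral_ofReal_mul_cexp_dual_eq_zero {f : E → ℝ}
    (hf : Integrable f μ) (h : ∀ L : StrongDual ℝ E, ∫ x, (f x : ℂ) * cexp (L x * I) ∂μ = 0) :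
    f =ᵐ[μ] 0 := by
  have hpos_meas := hf.aemeasurable.ennreal_ofReal
  have hneg_meas := hf.neg.aemeasurable.ennreal_ofReal
  have := isFiniteMeasure_withDensity_ofReal hf.2
  have := isFiniteMeasure_withDensity_ofReal hf.neg.2
  have hpos_int : Integrable (fun x => ((max (f x) 0 : ℝ) : ℂ)) μ := hf.pos_part.ofReal
  have hneg_int : Integrable (fun x => ((max ((-f) x) 0 : ℝ) : ℂ)) μ := hf.neg.pos_part.ofReal
  have hcharFun : (μ.withDensity fun x => ENNReal.ofReal (f x)) =
      μ.withDensity fun x => ENNReal.ofReal ((-f) x) := by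
    refine Measure.ext_of_charFunDual (funext fun L => ?_)
    rw [charFunDual_apply, charFunDual_apply,
      integral_withDensity_eq_integral_toReal_smul₀ hpos_meas (by simp),
      integral_withDensity_eq_integral_toReal_smul₀ hneg_meas (by simp), ← sub_eq_zero]
    simp only [ENNReal.toReal_ofReal', real_smul]
    rw [← integral_sub (integrable_mul_cexp_dual hpos_int L)
      (integrable_mul_cexp_dual hneg_int L), ← h L]
    congr with x
    rw [← sub_mul, ← ofReal_sub, Pi.neg_apply, max_zero_sub_max_neg_zero_eq_self]
  have hdensity := (withDensity_eq_iff hpos_meas hneg_meas hf.lintegral_lt_top.ne).1 hcharFun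
  filter_upwards [hdensity] with x hx
  have hmax := congrArg ENNReal.toReal hx
  simp only [ENNReal.toReal_ofReal', Pi.neg_apply] at hmax
  rw [Pi.zero_apply, ← max_zero_sub_max_neg_zero_eq_self (f x), hmax, sub_self]

theorem ae_eq_zero_of_forall_integral_mul_cexp_dual_eq_zero {f : E → ℂ} (hf : Integrable f μ)
    (h : ∀ L : StrongDual ℝ E, ∫ x, f x * cexp (L x * I) ∂μ = 0) : f =ᵐ[μ] 0 := by
  have hre : (fun x => (f x).re) =ᵐ[μ] 0 :=
    ae_eq_zero_of_forall_integral_ofReal_mul_cexp_dual_eq_zero hf.re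
      (integral_ofReal_re_mul_cexp_dual_eq_zero hf h)
  have him : (fun x => (-I * f x).re) =ᵐ[μ] 0 :=
    ae_eq_zero_of_forall_integral_ofReal_mul_cexp_dual_eq_zero (hf.const_mul (-I)).re
      (integral_ofReal_re_mul_cexp_dual_eq_zero (hf.const_mul (-I)) fun L => by
        simp only [mul_assoc, integral_const_mul, h, mul_zero])
  filter_upwards [hre, him] with x hxre hxim
  exact Complex.ext hxre (by simpa using hxim)

theorem ae_eq_of_forall_integral_mul_cexp_dual_eq {f g : E → ℂ} (hf : Integrable f μ)
    (hg : Integrable g μ)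
    (h : ∀ L : StrongDual ℝ E,
      ∫ x, f x * cexp (L x * I) ∂μ = ∫ x, g x * cexp (L x * I) ∂μ) : f =ᵐ[μ] g := by
  refine (sub_ae_eq_zero f g).1
    (ae_eq_zero_of_forall_integral_mul_cexp_dual_eq_zero (hf.sub hg) fun L => ?_)
  simp only [Pi.sub_apply, sub_mul]
  rw [integral_sub (integrable_mul_cexp_dual hf L) (integrable_mul_cexp_dual hg L), h, sub_self]

end FourierUniqueness

section Gaussian

variable {E : Type*} [NormedAddCommGroup E] [NormedSpace ℝ E] [FiniteDimensional ℝ E]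
  [MeasurableSpace E] [BorelSpace E] {μ : Measure E} [μ.IsAddHaarMeasure]

lemma integrable_exp_neg_mul_sq_norm {c : ℝ} (hc : 0 < c) :
    Integrable (fun x : E => Real.exp (-c * ‖x‖ ^ 2)) μ := by
  rcases subsingleton_or_nontrivial E with _ | _
  · exact Continuous.integrable_of_hasCompactSupport (by fun_prop) (.of_compactSpace _)
  · rw [integrable_fun_norm_addHaar μ (f := fun r => Real.exp (-c * r ^ 2))]
    have hradial := integrable_rpow_mul_exp_neg_mul_sq hc
      (s := (Module.finrank ℝ E - 1 : ℕ)) (neg_one_lt_zero.trans_le (Nat.cast_nonneg _))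
    simpa only [Real.rpow_natCast, smul_eq_mul] using hradial.integrableOn

lemma integrable_exp_mul_norm_sub_mul_sq_norm (b : ℝ) {c : ℝ} (hc : 0 < c) :
    Integrable (fun x : E => Real.exp (b * ‖x‖ - c * ‖x‖ ^ 2)) μ := by
  refine ((integrable_exp_neg_mul_sq_norm (half_pos hc)).const_mul
    (Real.exp (b ^ 2 / (2 * c)))).mono' (by fun_prop) (ae_of_all _ fun x => ?_)
  rw [Real.norm_of_nonneg (Real.exp_nonneg _), ← Real.exp_add, Real.exp_le_exp]
  have hsq : b ^ 2 / (2 * c) + -(c / 2) * ‖x‖ ^ 2 - (b * ‖x‖ - c * ‖x‖ ^ 2) =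
      (b - c * ‖x‖) ^ 2 / (2 * c) := by
    field_simp
    ring
  exact sub_nonneg.1 (hsq ▸ by positivity)

end Gaussian

lemma pi_sq_norm_le_sum_sq_norm {ι : Type*} [Fintype ι] {E : ι → Type*}
    [∀ i, SeminormedAddGroup (E i)] (v : ∀ i, E i) : ‖v‖ ^ 2 ≤ ∑ i, ‖v i‖ ^ 2 := by
  have hsum : 0 ≤ ∑ i, ‖v i‖ ^ 2 := by positivity
  rw [← Real.le_sqrt (norm_nonneg v) hsum, pi_norm_le_iff_of_nonneg (Real.sqrt_nonneg _)]
  exact fun i => Real.le_sqrt_of_sq_le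
    (Finset.single_le_sum (f := fun j => ‖v j‖ ^ 2) (fun _ _ => by positivity) (Finset.mem_univ i))

lemma prod_sq_norm_le_add_sq_norm {E F : Type*} [SeminormedAddGroup E] [SeminormedAddGroup F]
    (p : E × F) : ‖p‖ ^ 2 ≤ ‖p.1‖ ^ 2 + ‖p.2‖ ^ 2 := by
  rcases max_choice ‖p.1‖ ‖p.2‖ with h | h <;> rw [Prod.norm_def, h] <;>
    simp

lemma abs_im_mul_conj_le (z w : ℂ) :
    |(z * starRingEnd ℂ w).im| ≤ (‖z‖ ^ 2 + ‖w‖ ^ 2) / 2 := by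
  calc |(z * starRingEnd ℂ w).im| ≤ ‖z‖ * ‖w‖ := by
        simpa using abs_im_le_norm (z * starRingEnd ℂ w)
    _ ≤ (‖z‖ ^ 2 + ‖w‖ ^ 2) / 2 := by linarith [two_mul_le_add_sq ‖z‖ ‖w‖]

lemma mul_sum_im_mul_conj_le {ι : Type*} (s : Finset ι) (a : ℝ) (z w : ι → ℂ) :
    a * ∑ j ∈ s, (z j * starRingEnd ℂ (w j)).im ≤
      |a| / 2 * ((∑ j ∈ s, ‖z j‖ ^ 2) + ∑ j ∈ s, ‖w j‖ ^ 2) := by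
  rw [← Finset.sum_add_distrib, Finset.mul_sum, Finset.mul_sum]
  refine Finset.sum_le_sum fun j _ => ?_
  calc a * (z j * starRingEnd ℂ (w j)).im
      ≤ |a| * |(z j * starRingEnd ℂ (w j)).im| := (le_abs_self _).trans (abs_mul _ _).le
    _ ≤ |a| * ((‖z j‖ ^ 2 + ‖w j‖ ^ 2) / 2) := by gcongr; exact abs_im_mul_conj_le _ _
    _ = |a| / 2 * (‖z j‖ ^ 2 + ‖w j‖ ^ 2) := by ring

lemma cothR_neg (x : ℝ) : cothR (-x) = -cothR x := by
  simp only [cothR, Real.cosh_neg, Real.sinh_neg, div_neg]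

lemma one_lt_cothR {x : ℝ} (hx : 0 < x) : 1 < cothR x :=
  (one_lt_div (Real.sinh_pos_iff.2 hx)).2 (Real.sinh_lt_cosh x)

lemma abs_lt_mul_cothR_mul {a x : ℝ} (ha : 0 < a) (hx : x ≠ 0) : |x| < x * cothR (a * x) := by
  have hcoth : x * cothR (a * x) = |x| * cothR (a * |x|) := by
    rcases abs_choice x with h | h <;> simp only [h, mul_neg, cothR_neg, neg_mul, neg_neg]
  rw [hcoth]
  exact lt_mul_of_one_lt_right (abs_pos.2 hx) (one_lt_cothR (mul_pos ha (abs_pos.2 hx)))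

section FockSpace

variable {n : ℕ} {t lam : ℝ}

lemma WF_nonneg (z w : Fin n → ℂ) : 0 ≤ WF n t lam z w := by
  unfold WF
  positivity

lemma continuous_WF : Continuous fun q : (Fin n → ℂ) × (Fin n → ℂ) => WF n t lam q.1 q.2 := by
  unfold WF
  fun_prop

lemma WF_le_exp_neg_mul_sum_sq_norm (z w : Fin n → ℂ) :
    WF n t lam z w ≤ Real.exp (-((lam * cothR (2 * t * lam) - |lam|) / 2) *
      ((∑ j, ‖z j‖ ^ 2) + ∑ j, ‖w j‖ ^ 2)) := by
  unfold WF
  rw [← Real.exp_add, Real.exp_le_exp]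
  linarith [mul_sum_im_mul_conj_le Finset.univ lam z w]

lemma exists_WF_le_exp_neg_mul_sq_norm (ht : 0 < t) (hlam : lam ≠ 0) :
    ∃ c > 0, ∀ q : (Fin n → ℂ) × (Fin n → ℂ),
      WF n t lam q.1 q.2 ≤ Real.exp (-c * ‖q‖ ^ 2) := by
  have hc : 0 < (lam * cothR (2 * t * lam) - |lam|) / 2 :=
    half_pos (sub_pos.2 (abs_lt_mul_cothR_mul (by positivity) hlam))
  refine ⟨_, hc, fun q => (WF_le_exp_neg_mul_sum_sq_norm q.1 q.2).trans
    (Real.exp_le_exp.2 (mul_le_mul_of_nonpos_left ?_ (neg_nonpos.2 hc.le)))⟩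
  calc ‖q‖ ^ 2 ≤ ‖q.1‖ ^ 2 + ‖q.2‖ ^ 2 := prod_sq_norm_le_add_sq_norm q
    _ ≤ (∑ j, ‖q.1 j‖ ^ 2) + ∑ j, ‖q.2 j‖ ^ 2 :=
      add_le_add (pi_sq_norm_le_sum_sq_norm q.1) (pi_sq_norm_le_sum_sq_norm q.2)

lemma fockMem_of_norm_le_exp_mul_norm (ht : 0 < t) (hlam : lam ≠ 0)
    {G : (Fin n → ℂ) × (Fin n → ℂ) → ℂ} (hG : Differentiable ℂ G) {C b : ℝ}
    (hbound : ∀ q, ‖G q‖ ≤ C * Real.exp (b * ‖q‖)) : FockMem n t lam G := by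
  obtain ⟨c, hc, hW⟩ := exists_WF_le_exp_neg_mul_sq_norm (n := n) ht hlam
  have : (volume : Measure ((Fin n → ℂ) × (Fin n → ℂ))).IsAddHaarMeasure :=
    Measure.prod.instIsAddHaarMeasure volume volume
  refine ⟨hG, ((integrable_exp_mul_norm_sub_mul_sq_norm (2 * b) hc).const_mul (C ^ 2)).mono'
    ((hG.continuous.norm.pow 2).mul continuous_WF).aestronglyMeasurable
    (ae_of_all _ fun q => ?_)⟩
  rw [Real.norm_of_nonneg (mul_nonneg (sq_nonneg _) (WF_nonneg _ _))]
  calc ‖G q‖ ^ 2 * WF n t lam q.1 q.2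
      ≤ (C * Real.exp (b * ‖q‖)) ^ 2 * Real.exp (-c * ‖q‖ ^ 2) := by
        gcongr
        exacts [WF_nonneg _ _, hbound q, hW q]
    _ = C ^ 2 * Real.exp (2 * b * ‖q‖ - c * ‖q‖ ^ 2) := by
        rw [mul_pow, ← Real.exp_nat_mul, mul_assoc, ← Real.exp_add]
        push_cast
        ring_nf

lemma fockMem_cexp_dual (ht : 0 < t) (hlam : lam ≠ 0)
    (A : StrongDual ℂ ((Fin n → ℂ) × (Fin n → ℂ))) : FockMem n t lam fun q => cexp (A q) := by
  refine fockMem_of_norm_le_exp_mul_norm ht hlam (C := 1) (b := ‖A‖) A.differentiable.cexp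
    fun q => ?_
  rw [norm_exp, one_mul, Real.exp_le_exp]
  exact (re_le_norm _).trans (A.le_opNorm q)

lemma fockMem_one (ht : 0 < t) (hlam : lam ≠ 0) : FockMem n t lam fun _ => 1 := by
  simpa using fockMem_cexp_dual (n := n) ht hlam 0

lemma integrable_WF (ht : 0 < t) (hlam : lam ≠ 0) :
    Integrable fun q : (Fin n → ℂ) × (Fin n → ℂ) => WF n t lam q.1 q.2 := by
  simpa using (fockMem_one (n := n) ht hlam).2

lemma exists_fockMem_mul_conj_eq_cexp_dual (ht : 0 < t) (hlam : lam ≠ 0)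
    (L : StrongDual ℝ ((Fin n → ℂ) × (Fin n → ℂ))) :
    ∃ F G, FockMem n t lam F ∧ FockMem n t lam G ∧
      ∀ q, F q * starRingEnd ℂ (G q) = cexp (L q * I) := by
  let A : StrongDual ℂ ((Fin n → ℂ) × (Fin n → ℂ)) := L.extendRCLike
  refine ⟨_, _, fockMem_cexp_dual ht hlam ((I / 2) • A),
    fockMem_cexp_dual ht hlam ((-I / 2) • A), fun q => ?_⟩
  have hA : (A q).re = L q := L.re_extendRCLike_apply (𝕜 := ℂ) q
  rw [← exp_conj, ← exp_add, ← hA, re_eq_add_conj]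
  simp only [FunLike.coe_smul, Pi.smul_apply, smul_eq_mul, map_mul, map_div₀, map_neg, conj_I,
    neg_neg, map_ofNat]
  ring_nf

end FockSpace

theorem Fock_weight_unique_general
    (n : ℕ) (t lam : ℝ) (ht : 0 < t) (hlam : lam ≠ 0)
    (U : (Fin n → ℂ) × (Fin n → ℂ) → ℂ)
    (hInt : ∀ F G : (Fin n → ℂ) × (Fin n → ℂ) → ℂ, FockMem n t lam F → FockMem n t lam G →
      Integrable (fun q => F q * starRingEnd ℂ (G q) * U q) volume)
    (hEq : ∀ F G : (Fin n → ℂ) × (Fin n → ℂ) → ℂ, FockMem n t lam F → FockMem n t lam G →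
      ∫ q, F q * starRingEnd ℂ (G q) * (WF n t lam q.1 q.2 : ℂ) =
        ∫ q, F q * starRingEnd ℂ (G q) * U q) :
    U =ᵐ[volume] fun q => (WF n t lam q.1 q.2 : ℂ) := by
  have hU : Integrable U := by
    simpa using hInt _ _ (fockMem_one ht hlam) (fockMem_one ht hlam)
  refine ae_eq_of_forall_integral_mul_cexp_dual_eq hU (integrable_WF ht hlam).ofReal fun L => ?_
  obtain ⟨F, G, hF, hG, hFG⟩ := exists_fockMem_mul_conj_eq_cexp_dual ht hlam L
  simpa only [hFG, mul_comm (cexp _)] using (hEq F G hF hG).symm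

/-- The non-negative weight function of the twisted Fock space is unique:
if a non-negative measurable `U` reproduces all the inner products of `ℱ_t^λ(ℂ^{2n})`, then
`U = 𝒲_t^λ` almost everywhere. -/
theorem Fock_weight_unique
    (n : ℕ) (hn : 1 ≤ n) (t lam : ℝ) (ht : 0 < t) (hlam : lam ≠ 0)
    (U : (Fin n → ℂ) × (Fin n → ℂ) → ℝ)
    (hUmeas : Measurable U) (hUnonneg : ∀ q, 0 ≤ U q)
    (hInt : ∀ F G : (Fin n → ℂ) × (Fin n → ℂ) → ℂ, FockMem n t lam F → FockMem n t lam G →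
      Integrable (fun q : (Fin n → ℂ) × (Fin n → ℂ) =>
        F q * (starRingEnd ℂ) (G q) * (U q : ℂ)) volume)
    (hEq : ∀ F G : (Fin n → ℂ) × (Fin n → ℂ) → ℂ, FockMem n t lam F → FockMem n t lam G →
      (∫ q : (Fin n → ℂ) × (Fin n → ℂ),
          F q * (starRingEnd ℂ) (G q) * (WF n t lam q.1 q.2 : ℂ))
        = ∫ q : (Fin n → ℂ) × (Fin n → ℂ), F q * (starRingEnd ℂ) (G q) * (U q : ℂ)) :
    U =ᵐ[volume] fun q : (Fin n → ℂ) × (Fin n → ℂ) => WF n t lam q.1 q.2 := by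
  filter_upwards [Fock_weight_unique_general n t lam ht hlam (fun q => U q) hInt hEq] with q hq
  exact ofReal_injective hq
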